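/- arXiv:1410.5559 — 2 statements merged into one kernel-verified Lean document; each statement's English description precedes it below -/
import Mathlib

section
/- Let $n \geq 1$, let $\alpha > 2$ be a real number, and let $U \in \mathbb{R}^{n \times n}$ be a symmetric matrix satisfying $U \succ \alpha\sqrt{\alpha - 1}\, I$. Then $\frac{1}{\sqrt{\alpha - 1}}\, U - \frac{1}{\alpha^2}\, U^2 \prec I$. -/
open Matrix

/-- If `U` is symmetric and `U ≻ α√(α-1) I` for some `α > 2`, then
`(α-1)^{-1/2} U - α^{-2} U² ≺ I`. -/
theorem combination_lt_one_of_posDef {n : ℕ} (hn : 1 ≤ n) (α : ℝ) (hα : 2 < α)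
    (U : Matrix (Fin n) (Fin n) ℝ) (hU : U.IsSymm)
    (h : (U - (α * Real.sqrt (α - 1)) • (1 : Matrix (Fin n) (Fin n) ℝ)).PosDef) :
    ((1 : Matrix (Fin n) (Fin n) ℝ) -
      ((Real.sqrt (α - 1))⁻¹ • U - (α ^ 2)⁻¹ • (U * U))).PosDef := by
  have hs2 : Real.sqrt (α - 1) ^ 2 = α - 1 := Real.sq_sqrt (by linarith)
  have hs : 0 < Real.sqrt (α - 1) := Real.sqrt_pos.mpr (by linarith)
  generalize Real.sqrt (α - 1) = s at *
  have hα0 : 0 < α := by linarith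
  have hc : 0 < (α ^ 2)⁻¹ * (α * (s - s⁻¹)) := by
    have h1 : s - s⁻¹ = (α - 2) / s := by
      field_simp
      linarith
    rw [h1]
    have : 0 < α - 2 := by linarith
    positivity
  have key : (1 : Matrix (Fin n) (Fin n) ℝ) - (s⁻¹ • U - (α ^ 2)⁻¹ • (U * U)) =
      ((α ^ 2)⁻¹ * (α * (s - s⁻¹))) • (U - (α * s) • (1 : Matrix (Fin n) (Fin n) ℝ)) +
      (α ^ 2)⁻¹ • ((U - (α * s) • (1 : Matrix (Fin n) (Fin n) ℝ))ᴴ *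
        (U - (α * s) • (1 : Matrix (Fin n) (Fin n) ℝ))) := by
    rw [h.isHermitian.eq]
    simp only [sub_mul, mul_sub, smul_mul_assoc, mul_smul_comm, one_mul, mul_one]
    match_scalars
    · field_simp
      ring
    · field_simp
      linarith
    · ring
  rw [key]
  exact (h.smul hc).add_posSemidef
    ((Matrix.posSemidef_conjTranspose_mul_self _).smul (by positivity))
end

section
/- Let $m \geq n \geq 1$ and let $D, T \in \mathbb{R}^{m \times n}$ with $D^T D$ positive definite and $T^T T$ positive definite. Then the function $f(X) = \operatorname{tr}\big((DX - T)^T (D - T X^{-1})\big)$ is strictly convex on the open convex cone of $n \times n$ symmetric positive definite matrices; that is, for all symmetric positive definite $X_1 \neq X_2$ and all $0 < t < 1$, $f(t X_1 + (1 - t) X_2) < t f(X_1) + (1 - t) f(X_2)$. -/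
open Matrix

open scoped MatrixOrder ComplexOrder in
lemma pdtls_factor {n : ℕ} (A : Matrix (Fin n) (Fin n) ℝ) (hA : A.PosDef) :
    ∃ B : Matrix (Fin n) (Fin n) ℝ, A = Bᴴ * B := by
  obtain ⟨B, hB⟩ := CStarAlgebra.nonneg_iff_eq_star_mul_self.mp hA.posSemidef.nonneg
  exact ⟨B, hB⟩

lemma pdtls_tangent {m n : ℕ} (T : Matrix (Fin m) (Fin n) ℝ) (hT : (Tᵀ * T).PosDef)
    (A X : Matrix (Fin n) (Fin n) ℝ) (hA : A.PosDef) (hX : X.PosDef) (hne : A ≠ X) :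
    2 * (Tᵀ * T * X⁻¹).trace - (Tᵀ * T * (X⁻¹ * A * X⁻¹)).trace < (Tᵀ * T * A⁻¹).trace := by
  have hAd := (Matrix.isUnit_iff_isUnit_det A).1 hA.isUnit
  have hXd := (Matrix.isUnit_iff_isUnit_det X).1 hX.isUnit
  have hPd := (Matrix.isUnit_iff_isUnit_det _).1 hT.isUnit
  obtain ⟨E, hE⟩ : ∃ E, E = A⁻¹ - X⁻¹ := ⟨_, rfl⟩
  have hEt : Eᵀ = E := by
    have h1 := hA.inv.isHermitian.eq
    have h2 := hX.inv.isHermitian.eq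
    rw [conjTranspose_eq_transpose_of_trivial] at h1 h2
    rw [hE, transpose_sub, h1, h2]
  have hexp : E * A * E = A⁻¹ - X⁻¹ - X⁻¹ + X⁻¹ * A * X⁻¹ := by
    rw [hE, sub_mul, Matrix.nonsing_inv_mul _ hAd, sub_mul, one_mul, mul_sub,
      Matrix.mul_nonsing_inv_cancel_right _ _ hAd]
    abel
  obtain ⟨B, hB⟩ := pdtls_factor A hA
  have hBt : A = Bᵀ * B := by rw [hB, conjTranspose_eq_transpose_of_trivial]
  have htr : (Tᵀ * T * (E * A * E)).trace = ((B * E * Tᵀ)ᴴ * (B * E * Tᵀ)).trace := by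
    rw [conjTranspose_eq_transpose_of_trivial, transpose_mul, transpose_mul, hEt,
      transpose_transpose, hBt, Matrix.mul_assoc, Matrix.trace_mul_comm]
    simp only [Matrix.mul_assoc]
  have h0 : 0 ≤ ((B * E * Tᵀ)ᴴ * (B * E * Tᵀ)).trace :=
    (posSemidef_conjTranspose_mul_self _).trace_nonneg
  have hne0 : ((B * E * Tᵀ)ᴴ * (B * E * Tᵀ)).trace ≠ 0 := by
    intro h
    rw [trace_conjTranspose_mul_self_eq_zero_iff] at h
    have h1 : A * E * (Tᵀ * T) = 0 := by
      have : A * E * (Tᵀ * T) = Bᵀ * (B * E * Tᵀ) * T := by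
        rw [hBt]; simp only [Matrix.mul_assoc]
      rw [this, h]; simp
    have h2 : A * E = 0 := by
      rw [← Matrix.mul_nonsing_inv_cancel_right _ (A * E) hPd, h1, zero_mul]
    have h3 : E = 0 := by
      rw [← Matrix.nonsing_inv_mul_cancel_left _ E hAd, h2, mul_zero]
    apply hne
    rw [hE, sub_eq_zero] at h3
    rw [← Matrix.nonsing_inv_nonsing_inv A hAd, h3, Matrix.nonsing_inv_nonsing_inv X hXd]
  have hpos := lt_of_le_of_ne h0 hne0.symm
  rw [← htr, hexp, mul_add, mul_sub, mul_sub, trace_add, trace_sub, trace_sub] at hpos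
  linarith

lemma pdtls_eq {m n : ℕ} (D T : Matrix (Fin m) (Fin n) ℝ)
    (X : Matrix (Fin n) (Fin n) ℝ) (hX : X.PosDef) :
    ((D * X - T)ᵀ * (D - T * X⁻¹)).trace =
      (Dᵀ * D * X).trace - (Dᵀ * T).trace - (Tᵀ * D).trace + (Tᵀ * T * X⁻¹).trace := by
  have hXd := (Matrix.isUnit_iff_isUnit_det X).1 hX.isUnit
  have h1 : Xᵀ = X := by
    have := hX.isHermitian.eq
    rwa [conjTranspose_eq_transpose_of_trivial] at this
  have e1 : (X * Dᵀ * D).trace = (Dᵀ * D * X).trace := by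
    rw [Matrix.mul_assoc, Matrix.trace_mul_comm]
  have e2 : (X * Dᵀ * (T * X⁻¹)).trace = (Dᵀ * T).trace := by
    rw [← Matrix.mul_assoc, Matrix.trace_mul_comm, Matrix.mul_assoc X,
      Matrix.nonsing_inv_mul_cancel_left _ _ hXd]
  rw [transpose_sub, transpose_mul, h1, Matrix.sub_mul, Matrix.mul_sub, Matrix.mul_sub,
    trace_sub, trace_sub, trace_sub, e1, e2, ← Matrix.mul_assoc Tᵀ]
  ring

/-- The error function `f(X) = tr((DX - T)ᵀ (D - T X⁻¹))` of the positive definite total least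
squares problem is strictly convex on the cone of symmetric positive definite matrices. -/
theorem strictConvexOn_pdtls_error {m n : ℕ} (hn : 1 ≤ n) (hmn : n ≤ m)
    (D T : Matrix (Fin m) (Fin n) ℝ)
    (hD : (Dᵀ * D).PosDef) (hT : (Tᵀ * T).PosDef) :
    ∀ X₁ X₂ : Matrix (Fin n) (Fin n) ℝ, X₁.PosDef → X₂.PosDef → X₁ ≠ X₂ →
      ∀ t : ℝ, 0 < t → t < 1 →
        ((D * (t • X₁ + (1 - t) • X₂) - T)ᵀ *
            (D - T * (t • X₁ + (1 - t) • X₂)⁻¹)).trace <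
          t * ((D * X₁ - T)ᵀ * (D - T * X₁⁻¹)).trace +
            (1 - t) * ((D * X₂ - T)ᵀ * (D - T * X₂⁻¹)).trace := by
  intro X₁ X₂ h₁ h₂ hne t ht0 ht1
  have hs : 0 < 1 - t := by linarith
  have hX : (t • X₁ + (1 - t) • X₂).PosDef := (h₁.smul ht0).add (h₂.smul hs)
  rw [pdtls_eq D T _ hX, pdtls_eq D T _ h₁, pdtls_eq D T _ h₂]
  obtain ⟨X, hXe⟩ : ∃ X, X = t • X₁ + (1 - t) • X₂ := ⟨_, rfl⟩
  rw [← hXe] at hX ⊢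
  have hXd := (Matrix.isUnit_iff_isUnit_det X).1 hX.isUnit
  have n1 : X₁ ≠ X := by
    intro h
    apply hne
    have h3 : (1 - t) • (X₁ - X₂) = 0 := by
      have : (1 - t) • (X₁ - X₂) = X₁ - (t • X₁ + (1 - t) • X₂) := by module
      rw [this, ← hXe, ← h, sub_self]
    exact sub_eq_zero.1 ((smul_eq_zero.1 h3).resolve_left hs.ne')
  have n2 : X₂ ≠ X := by
    intro h
    apply hne
    have h3 : t • (X₁ - X₂) = 0 := by
      have : t • (X₁ - X₂) = (t • X₁ + (1 - t) • X₂) - X₂ := by module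
      rw [this, ← hXe, ← h, sub_self]
    exact sub_eq_zero.1 ((smul_eq_zero.1 h3).resolve_left ht0.ne')
  have k1 := mul_lt_mul_of_pos_left (pdtls_tangent T hT X₁ X h₁ hX n1) ht0
  have k2 := mul_lt_mul_of_pos_left (pdtls_tangent T hT X₂ X h₂ hX n2) hs
  have k3 : (Tᵀ * T * X⁻¹).trace = t * (Tᵀ * T * (X⁻¹ * X₁ * X⁻¹)).trace
      + (1 - t) * (Tᵀ * T * (X⁻¹ * X₂ * X⁻¹)).trace := by
    have : X⁻¹ = t • (X⁻¹ * X₁ * X⁻¹) + (1 - t) • (X⁻¹ * X₂ * X⁻¹) := by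
      have e : t • (X⁻¹ * X₁ * X⁻¹) + (1 - t) • (X⁻¹ * X₂ * X⁻¹)
          = X⁻¹ * (t • X₁ + (1 - t) • X₂) * X⁻¹ := by
        simp only [mul_add, add_mul, mul_smul_comm, smul_mul_assoc]
      rw [e, ← hXe, Matrix.nonsing_inv_mul _ hXd, one_mul]
    conv_lhs => rw [this]
    simp only [mul_add, mul_smul_comm, trace_add, trace_smul, smul_eq_mul]
  have k4 : (Dᵀ * D * X).trace = t * (Dᵀ * D * X₁).trace + (1 - t) * (Dᵀ * D * X₂).trace := by
    rw [hXe]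
    simp only [mul_add, mul_smul_comm, trace_add, trace_smul, smul_eq_mul]
  rw [k4]
  linarith
end
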